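/- arXiv:1801.01336 — 2 statements merged into one kernel-verified Lean document; each statement's English description precedes it below -/
import Mathlib

section
/- Let Δ ≥ 4 be an even integer and let t be an integer with 1 ≤ t ≤ Δ−2. Let c be a proper edge-coloring of the multigraph H^Δ_t. If j and h are indices with h ∉ {j, j'} and P_c(v_j) = P_c(v_h), then P_c(v_{j'}) ≠ P_c(v_{h'}). (Equivalently, the palette multigraph restricted to the non-central vertices has no multiple edges.) -/
/-- A proper edge-coloring of a multigraph given by an edge-index type `E`,
a vertex type `V` and an endpoints map `ends : E → Sym2 V`: distinct edges
sharing an endpoint receive distinct colors. -/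
def MG.Proper {E V C : Type*} (ends : E → Sym2 V) (c : E → C) : Prop :=
  ∀ e₁ e₂ : E, e₁ ≠ e₂ → (∃ x : V, x ∈ ends e₁ ∧ x ∈ ends e₂) → c e₁ ≠ c e₂

/-- The palette of a vertex: the set of colors of the edges incident with it. -/
def MG.palette {E V C : Type*} (ends : E → Sym2 V) (c : E → C) (x : V) : Set C :=
  {γ : C | ∃ e : E, x ∈ ends e ∧ c e = γ}

/-- The multigraph `H^Δ_t`: vertices are `none` (the center `u`) and `some j`
(the vertex `v_j`), edges are the spokes `e_j = u v_j` together with `t`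
parallel edges between `v_{2i}` and `v_{2i+1}`. -/
def Hends (Δ t : ℕ) : (Fin Δ ⊕ Fin (Δ / 2) × Fin t) → Sym2 (Option (Fin Δ))
  | Sum.inl j => s(none, some j)
  | Sum.inr (i, _) =>
      s(some ⟨2 * i.1, by have := i.2; omega⟩, some ⟨2 * i.1 + 1, by have := i.2; omega⟩)

/-- The partner `j'` of an index `j`: `j+1` if `j` is even, `j-1` if `j` is odd. -/
def partner {Δ : ℕ} (hΔ : 2 ∣ Δ) (j : Fin Δ) : Fin Δ :=
  ⟨if j.1 % 2 = 0 then j.1 + 1 else j.1 - 1, by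
    obtain ⟨k, hk⟩ := hΔ; have := j.2; split <;> omega⟩

/-!
If `v_j` and `v_h` have equal palettes, the color of the spoke `e_j` occurs at `v_h`, necessarily on
an edge of the parallel class there, because spokes have distinct colors. Hence it also occurs at
`v_{h'}`. It cannot occur at `v_{j'}`: a parallel edge carrying it would also meet `e_j` at `v_j`.
-/

theorem MG.Proper.injOn {E V C : Type*} {ends : E → Sym2 V} {c : E → C} (hc : MG.Proper ends c)
    (x : V) : Set.InjOn c {e | x ∈ ends e} := by
  intro e he f hf hcol
  by_contra hne
  exact hc e f hne ⟨x, he, hf⟩ hcol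

theorem MG.mem_palette_of_mem {E V C : Type*} {ends : E → Sym2 V} (c : E → C) {x : V}
    {e : E} (he : x ∈ ends e) : c e ∈ MG.palette ends c x :=
  ⟨e, he, rfl⟩

section Hends

variable {Δ t : ℕ}

theorem none_mem_Hends_inl (j : Fin Δ) : none ∈ Hends Δ t (Sum.inl j) :=
  Sym2.mem_mk_left _ _

theorem some_mem_Hends_inl {x j : Fin Δ} : some x ∈ Hends Δ t (Sum.inl j) ↔ x = j := by
  simp [Hends]

theorem some_mem_Hends_inr {x : Fin Δ} {p : Fin (Δ / 2) × Fin t} :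
    some x ∈ Hends Δ t (Sum.inr p) ↔ x.1 / 2 = p.1 := by
  simp only [Hends, Sym2.mem_iff, Option.some.injEq, Fin.ext_iff]
  omega

theorem partner_ne_self (hev : 2 ∣ Δ) (x : Fin Δ) : partner hev x ≠ x := by
  simp only [partner, ne_eq, Fin.ext_iff]
  split <;> omega

theorem partner_div_two (hev : 2 ∣ Δ) (x : Fin Δ) : (partner hev x).1 / 2 = x.1 / 2 := by
  simp only [partner]
  split <;> omega

theorem some_partner_mem_Hends_inr (hev : 2 ∣ Δ) {x : Fin Δ} {p : Fin (Δ / 2) × Fin t} :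
    some (partner hev x) ∈ Hends Δ t (Sum.inr p) ↔ some x ∈ Hends Δ t (Sum.inr p) := by
  rw [some_mem_Hends_inr, some_mem_Hends_inr, partner_div_two]

variable {C : Type*} {c : (Fin Δ ⊕ Fin (Δ / 2) × Fin t) → C}

theorem spoke_color_injective (hc : MG.Proper (Hends Δ t) c) :
    Function.Injective fun j : Fin Δ => c (Sum.inl j) := fun j h hcol =>
  Sum.inl_injective (hc.injOn none (none_mem_Hends_inl j) (none_mem_Hends_inl h) hcol)

theorem exists_parallel_edge_of_mem_palette {x : Fin Δ} {γ : C}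
    (hγ : γ ∈ MG.palette (Hends Δ t) c (some x)) (hne : γ ≠ c (Sum.inl x)) :
    ∃ p, some x ∈ Hends Δ t (Sum.inr p) ∧ c (Sum.inr p) = γ := by
  obtain ⟨k | p, hx, rfl⟩ := hγ
  · obtain rfl := some_mem_Hends_inl.mp hx
    exact absurd rfl hne
  · exact ⟨p, hx, rfl⟩

theorem mem_palette_partner (hev : 2 ∣ Δ) {x : Fin Δ} {γ : C}
    (hγ : γ ∈ MG.palette (Hends Δ t) c (some x)) (hne : γ ≠ c (Sum.inl x)) :
    γ ∈ MG.palette (Hends Δ t) c (some (partner hev x)) := by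
  obtain ⟨p, hx, hcol⟩ := exists_parallel_edge_of_mem_palette hγ hne
  exact ⟨Sum.inr p, (some_partner_mem_Hends_inr hev).mpr hx, hcol⟩

theorem spoke_color_notMem_palette_partner (hc : MG.Proper (Hends Δ t) c) (hev : 2 ∣ Δ)
    (j : Fin Δ) : c (Sum.inl j) ∉ MG.palette (Hends Δ t) c (some (partner hev j)) := by
  intro hmem
  obtain ⟨p, hp, hcol⟩ := exists_parallel_edge_of_mem_palette hmem
    ((spoke_color_injective hc).ne (partner_ne_self hev j).symm)
  have heq : Sum.inr p = Sum.inl j :=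
    hc.injOn (some j) ((some_partner_mem_Hends_inr hev).mp hp) (some_mem_Hends_inl.mpr rfl) hcol
  exact Sum.inr_ne_inl heq

theorem partner_palettes_distinct_general (hev : 2 ∣ Δ) (hc : MG.Proper (Hends Δ t) c)
    {j h : Fin Δ} (hhj : h ≠ j)
    (hpal : MG.palette (Hends Δ t) c (some j) = MG.palette (Hends Δ t) c (some h)) :
    MG.palette (Hends Δ t) c (some (partner hev j)) ≠
      MG.palette (Hends Δ t) c (some (partner hev h)) := by
  intro hpal'
  have hmem_h : c (Sum.inl j) ∈ MG.palette (Hends Δ t) c (some h) :=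
    hpal ▸ MG.mem_palette_of_mem c (some_mem_Hends_inl.mpr rfl)
  have hmem_h' : c (Sum.inl j) ∈ MG.palette (Hends Δ t) c (some (partner hev h)) :=
    mem_palette_partner hev hmem_h ((spoke_color_injective hc).ne hhj.symm)
  exact spoke_color_notMem_palette_partner hc hev j (hpal' ▸ hmem_h')

end Hends

/-- if `h ∉ {j, j'}` and `v_j`, `v_h` have the same palette, then
`v_{j'}` and `v_{h'}` have distinct palettes (no multiple edges in the palette
multigraph restricted to the non-central vertices). -/
theorem partner_palettes_distinct {Δ t : ℕ} (hΔ : 4 ≤ Δ) (hev : 2 ∣ Δ)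
    (ht1 : 1 ≤ t) (ht2 : t ≤ Δ - 2) {C : Type*}
    (c : (Fin Δ ⊕ Fin (Δ / 2) × Fin t) → C) (hc : MG.Proper (Hends Δ t) c)
    (j h : Fin Δ) (hhj : h ≠ j) (hhj' : h ≠ partner hev j)
    (hpal : MG.palette (Hends Δ t) c (some j) = MG.palette (Hends Δ t) c (some h)) :
    MG.palette (Hends Δ t) c (some (partner hev j)) ≠
      MG.palette (Hends Δ t) c (some (partner hev h)) :=
  partner_palettes_distinct_general hev hc hhj hpal
end

section
/- Let Δ ≥ 4 be an even integer and let G^Δ be the disjoint union of the multigraphs H^Δ_t for t = 1, 2, …, Δ−2. Then for every proper edge-coloring c of G^Δ, the number of distinct palettes occurring among the vertices of G^Δ is strictly greater than (Δ/2)·(Δ−2). -/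
/-- The palette index of a multigraph: the minimum, over all proper
edge-colorings with colors in ℕ, of the number of distinct palettes. -/
noncomputable def paletteIndex {E V : Type*} (ends : E → Sym2 V) : ℕ :=
  sInf {n : ℕ | ∃ c : E → ℕ, MG.Proper ends c ∧
    {P : Set ℕ | ∃ x : V, MG.palette ends c x = P}.ncard = n}

/-- The multigraph `G^Δ`: the disjoint union of the multigraphs `H^Δ_t`
for `t = 1, …, Δ−2` (the component indexed by `t : Fin (Δ-2)` is
`H^Δ_{t+1}`). -/
def Gends (Δ : ℕ) :
    (Σ t : Fin (Δ - 2), (Fin Δ ⊕ Fin (Δ / 2) × Fin (t.1 + 1))) →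
      Sym2 (Fin (Δ - 2) × Option (Fin Δ))
  | ⟨t, e⟩ => (Hends Δ (t.1 + 1) e).map (fun v => (t, v))

/-!
A proper coloring gives a vertex a palette of size equal to its degree. In `H^Δ_t` the vertices
`v_{2i}` and `v_{2i+1}` have degree `t + 1` and the center has degree `Δ`, so different components
share no palette of a vertex `v_j`, and none of these is the palette of a center.

Within one component, the palettes of `v_{2i}` and `v_{2i+1}` differ exactly in the colors of their
two spokes. Hence, after intersecting with the colors of the spokes at even indices, they differ
in a single element, a different one for each `i`. The indicator vectors over `𝔽₂` of these
intersections therefore have all `Δ / 2` standard basis vectors among their differences, and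
vectors affinely spanning a space of dimension `n` are at least `n + 1` in number.
-/

open scoped symmDiff

section SetFamilies

theorem indicator_one_sub_indicator_one_zmod_two {α : Type*} (s t : Set α) :
    s.indicator (1 : α → ZMod 2) - t.indicator 1 = (s ∆ t).indicator 1 := by
  ext x
  by_cases hs : x ∈ s <;> by_cases ht : x ∈ t <;>
    simp [Set.mem_symmDiff, hs, ht]

theorem card_lt_ncard_of_forall_symmDiff_eq_singleton {ι : Type*} [Fintype ι] {𝓕 : Set (Set ι)}
    (hne : 𝓕.Nonempty) (h : ∀ i, ∃ s ∈ 𝓕, ∃ t ∈ 𝓕, s ∆ t = {i}) :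
    Fintype.card ι < 𝓕.ncard := by
  classical
  have := hne.to_subtype
  have := Fintype.ofFinite 𝓕
  let v : 𝓕 → ι → ZMod 2 := fun s ↦ s.1.indicator 1
  have hspan : vectorSpan (ZMod 2) (Set.range v) = ⊤ := by
    rw [eq_top_iff, ← (Pi.basisFun (ZMod 2) ι).span_eq, Submodule.span_le]
    rintro _ ⟨i, rfl⟩
    obtain ⟨s, hs, t, ht, hst⟩ := h i
    have hdiff : v ⟨s, hs⟩ - v ⟨t, ht⟩ = Pi.single i 1 := by
      simp only [v, indicator_one_sub_indicator_one_zmod_two, hst, Set.indicator_singleton,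
        Pi.one_apply]
    rw [Pi.basisFun_apply, ← hdiff]
    exact vsub_mem_vectorSpan _ (Set.mem_range_self _) (Set.mem_range_self _)
  calc Fintype.card ι < Module.finrank (ZMod 2) (vectorSpan (ZMod 2) (Set.range v)) + 1 := by
        rw [hspan, finrank_top, Module.finrank_fintype_fun_eq_card]
        exact Nat.lt_succ_self _
    _ ≤ Fintype.card 𝓕 := finrank_vectorSpan_range_add_one_le _ _
    _ = 𝓕.ncard := by rw [← Nat.card_eq_fintype_card, Nat.card_coe_set_eq]

theorem insert_symmDiff_insert {α : Type*} {a b : α} {s : Set α} (hab : a ≠ b) (ha : a ∉ s)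
    (hb : b ∉ s) : insert a s ∆ insert b s = {a, b} := by
  ext x
  simp only [Set.mem_symmDiff, Set.mem_insert_iff, Set.mem_singleton_iff]
  grind

theorem mul_card_le_ncard_iUnion {α ι : Type*} [Fintype ι] {A : ι → Set α} {n : ℕ}
    (hfin : ∀ i, (A i).Finite) (hdisj : Pairwise (Function.onFun Disjoint A))
    (hn : ∀ i, n ≤ (A i).ncard) : n * Fintype.card ι ≤ (⋃ i, A i).ncard := by
  rw [Set.ncard_iUnion_of_finite hfin hdisj, finsum_eq_sum_of_fintype, mul_comm]
  exact Finset.card_nsmul_le_sum _ _ _ fun i _ ↦ hn i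

end SetFamilies

namespace MG

variable {E V C : Type*} {ends : E → Sym2 V} {c : E → C}

theorem palette_eq_image (ends : E → Sym2 V) (c : E → C) (x : V) :
    palette ends c x = c '' {e | x ∈ ends e} :=
  rfl

theorem Proper.injOn_incident (hc : Proper ends c) (x : V) : Set.InjOn c {e | x ∈ ends e} := by
  intro e he f hf hef
  by_contra hne
  exact hc e f hne ⟨x, he, hf⟩ hef

theorem Proper.ncard_palette (hc : Proper ends c) (x : V) :
    (palette ends c x).ncard = {e | x ∈ ends e}.ncard := by
  rw [palette_eq_image, (hc.injOn_incident x).ncard_image]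

end MG

section Component

variable {Δ t : ℕ} {C : Type*} {c : (Fin Δ ⊕ Fin (Δ / 2) × Fin t) → C}

/-- The vertex index `2i + b`: for `b = 0, 1` these are the two endpoints of the `i`-th bundle of
parallel edges in `H^Δ_t`. When `Δ` is odd, the last index is not of this form. -/
def bundleEnd (i : Fin (Δ / 2)) (b : Fin 2) : Fin Δ :=
  ⟨2 * i + b, by omega⟩

@[simp]
theorem bundleEnd_inj {i i' : Fin (Δ / 2)} {b b' : Fin 2} :
    bundleEnd i b = bundleEnd i' b' ↔ i = i' ∧ b = b' := by
  simp only [bundleEnd, Fin.ext_iff]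
  omega

theorem none_mem_Hends_iff {e : Fin Δ ⊕ Fin (Δ / 2) × Fin t} :
    none ∈ Hends Δ t e ↔ e ∈ Set.range Sum.inl := by
  rcases e with j | ⟨i, k⟩ <;> simp [Hends]

theorem some_bundleEnd_mem_Hends_iff {i : Fin (Δ / 2)} {b : Fin 2}
    {e : Fin Δ ⊕ Fin (Δ / 2) × Fin t} :
    some (bundleEnd i b) ∈ Hends Δ t e ↔
      e ∈ insert (Sum.inl (bundleEnd i b)) (Set.range fun k ↦ Sum.inr (i, k)) := by
  rcases e with j | ⟨i', k⟩
  · simp [Hends, eq_comm]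
  · simp only [Hends, bundleEnd, Sym2.mem_iff, Option.some.injEq, Fin.ext_iff, Set.mem_insert_iff,
      reduceCtorEq, Set.mem_range, Sum.inr.injEq, Prod.mk.injEq, exists_and_left,
      exists_apply_eq_apply, and_true, false_or]
    omega

theorem ncard_incident_none : {e | none ∈ Hends Δ t e}.ncard = Δ := by
  simp only [none_mem_Hends_iff, Set.ofPred_mem_eq,
    Set.ncard_range_of_injective Sum.inl_injective, Nat.card_fin]

theorem ncard_incident_bundleEnd (i : Fin (Δ / 2)) (b : Fin 2) :
    {e | some (bundleEnd i b) ∈ Hends Δ t e}.ncard = t + 1 := by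
  have hinj : Function.Injective fun k : Fin t ↦ (Sum.inr (i, k) : Fin Δ ⊕ _) :=
    Sum.inr_injective.comp (Prod.mk_right_injective i)
  simp only [some_bundleEnd_mem_Hends_iff, Set.ofPred_mem_eq]
  rw [Set.ncard_insert_of_notMem (by simp), Set.ncard_range_of_injective hinj, Nat.card_fin]

theorem palette_bundleEnd (c : (Fin Δ ⊕ Fin (Δ / 2) × Fin t) → C) (i : Fin (Δ / 2)) (b : Fin 2) :
    MG.palette (Hends Δ t) c (some (bundleEnd i b)) =
      insert (c (Sum.inl (bundleEnd i b))) (Set.range fun k ↦ c (Sum.inr (i, k))) := by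
  simp only [MG.palette_eq_image, some_bundleEnd_mem_Hends_iff, Set.ofPred_mem_eq,
    Set.image_insert_eq, ← Set.range_comp, Function.comp_def]

theorem injective_spoke_color (hc : MG.Proper (Hends Δ t) c) : Function.Injective (c ∘ Sum.inl) :=
  fun _ _ h ↦ Sum.inl_injective <|
    hc.injOn_incident none (none_mem_Hends_iff.2 ⟨_, rfl⟩) (none_mem_Hends_iff.2 ⟨_, rfl⟩) h

theorem spoke_color_notMem_range_bundle (hc : MG.Proper (Hends Δ t) c) (i : Fin (Δ / 2))
    (b : Fin 2) : c (Sum.inl (bundleEnd i b)) ∉ Set.range fun k ↦ c (Sum.inr (i, k)) := by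
  rintro ⟨k, hk⟩
  exact Sum.inr_ne_inl <| hc.injOn_incident (some (bundleEnd i b))
    (some_bundleEnd_mem_Hends_iff.2 <| .inr ⟨k, rfl⟩)
    (some_bundleEnd_mem_Hends_iff.2 <| .inl rfl) hk

theorem palette_bundleEnd_symmDiff (hc : MG.Proper (Hends Δ t) c) (i : Fin (Δ / 2)) :
    MG.palette (Hends Δ t) c (some (bundleEnd i 0)) ∆
        MG.palette (Hends Δ t) c (some (bundleEnd i 1)) =
      {c (Sum.inl (bundleEnd i 0)), c (Sum.inl (bundleEnd i 1))} := by
  simp only [palette_bundleEnd]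
  exact insert_symmDiff_insert ((injective_spoke_color hc).ne (by simp))
    (spoke_color_notMem_range_bundle hc i 0) (spoke_color_notMem_range_bundle hc i 1)

/-- The palettes of the endpoints of the bundles of parallel edges of `H^Δ_t`; for even `Δ` these
are the palettes of all vertices other than the center. -/
def bundlePalettes (Δ t : ℕ) (c : (Fin Δ ⊕ Fin (Δ / 2) × Fin t) → C) : Set (Set C) :=
  Set.range fun p : Fin (Δ / 2) × Fin 2 ↦ MG.palette (Hends Δ t) c (some (bundleEnd p.1 p.2))

theorem finite_bundlePalettes (c : (Fin Δ ⊕ Fin (Δ / 2) × Fin t) → C) :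
    (bundlePalettes Δ t c).Finite :=
  Set.finite_range _

theorem ncard_of_mem_bundlePalettes (hc : MG.Proper (Hends Δ t) c) {P : Set C}
    (hP : P ∈ bundlePalettes Δ t c) : P.ncard = t + 1 := by
  obtain ⟨p, rfl⟩ := hP
  rw [hc.ncard_palette, ncard_incident_bundleEnd]

theorem div_two_lt_ncard_bundlePalettes (hΔ : 2 ≤ Δ) (hc : MG.Proper (Hends Δ t) c) :
    Δ / 2 < (bundlePalettes Δ t c).ncard := by
  let evenSpokeColor : Fin (Δ / 2) → C := fun i ↦ c (Sum.inl (bundleEnd i 0))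
  let P (i : Fin (Δ / 2)) (b : Fin 2) : Set C :=
    MG.palette (Hends Δ t) c (some (bundleEnd i b))
  let 𝓕 : Set (Set (Fin (Δ / 2))) := (evenSpokeColor ⁻¹' ·) '' bundlePalettes Δ t c
  have hmem (i b) : evenSpokeColor ⁻¹' P i b ∈ 𝓕 := Set.mem_image_of_mem _ ⟨(i, b), rfl⟩
  have hdiff (i) : (evenSpokeColor ⁻¹' P i 0) ∆ (evenSpokeColor ⁻¹' P i 1) = {i} := by
    rw [← Set.preimage_symmDiff, palette_bundleEnd_symmDiff hc]
    ext i'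
    have hinj (j j' : Fin Δ) : c (Sum.inl j) = c (Sum.inl j') ↔ j = j' :=
      (injective_spoke_color hc).eq_iff
    simp [evenSpokeColor, hinj]
  calc Δ / 2 = Fintype.card (Fin (Δ / 2)) := (Fintype.card_fin _).symm
    _ < 𝓕.ncard := card_lt_ncard_of_forall_symmDiff_eq_singleton ⟨_, hmem ⟨0, by omega⟩ 0⟩
        fun i ↦ ⟨_, hmem i 0, _, hmem i 1, hdiff i⟩
    _ ≤ (bundlePalettes Δ t c).ncard := Set.ncard_image_le (finite_bundlePalettes c)

end Component

section DisjointUnion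

variable {Δ : ℕ} {C : Type*}
  {c : (Σ t : Fin (Δ - 2), (Fin Δ ⊕ Fin (Δ / 2) × Fin (t.1 + 1))) → C}

theorem mk_mem_Gends_iff {s t : Fin (Δ - 2)} {e : Fin Δ ⊕ Fin (Δ / 2) × Fin (s.1 + 1)}
    {x : Option (Fin Δ)} : (t, x) ∈ Gends Δ ⟨s, e⟩ ↔ s = t ∧ x ∈ Hends Δ (s.1 + 1) e := by
  simp only [Gends, Sym2.mem_map, Prod.mk.injEq]
  grind

theorem palette_Gends (c : (Σ t : Fin (Δ - 2), (Fin Δ ⊕ Fin (Δ / 2) × Fin (t.1 + 1))) → C)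
    (t : Fin (Δ - 2)) (x : Option (Fin Δ)) :
    MG.palette (Gends Δ) c (t, x) = MG.palette (Hends Δ (t.1 + 1)) (fun e ↦ c ⟨t, e⟩) x := by
  ext γ
  constructor
  · rintro ⟨⟨s, e⟩, hmem, rfl⟩
    obtain ⟨rfl, he⟩ := mk_mem_Gends_iff.1 hmem
    exact ⟨e, he, rfl⟩
  · rintro ⟨e, he, rfl⟩
    exact ⟨⟨t, e⟩, mk_mem_Gends_iff.2 ⟨rfl, he⟩, rfl⟩

theorem MG.Proper.component (hc : MG.Proper (Gends Δ) c) (t : Fin (Δ - 2)) :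
    MG.Proper (Hends Δ (t.1 + 1)) fun e ↦ c ⟨t, e⟩ := by
  rintro e f hne ⟨x, he, hf⟩
  exact hc ⟨t, e⟩ ⟨t, f⟩ (sigma_mk_injective.ne hne)
    ⟨(t, x), mk_mem_Gends_iff.2 ⟨rfl, he⟩, mk_mem_Gends_iff.2 ⟨rfl, hf⟩⟩

theorem ncard_palette_center (hc : MG.Proper (Gends Δ) c) (t : Fin (Δ - 2)) :
    (MG.palette (Gends Δ) c (t, none)).ncard = Δ := by
  rw [palette_Gends, (hc.component t).ncard_palette, ncard_incident_none]

/-- The palettes that a coloring of `G^Δ` gives to the endpoints of the bundles of parallel edges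
in its component `H^Δ_{t+1}`. -/
def componentPalettes (c : (Σ t : Fin (Δ - 2), (Fin Δ ⊕ Fin (Δ / 2) × Fin (t.1 + 1))) → C)
    (t : Fin (Δ - 2)) : Set (Set C) :=
  bundlePalettes Δ (t.1 + 1) fun e ↦ c ⟨t, e⟩

theorem componentPalettes_subset_range
    (c : (Σ t : Fin (Δ - 2), (Fin Δ ⊕ Fin (Δ / 2) × Fin (t.1 + 1))) → C) (t : Fin (Δ - 2)) :
    componentPalettes c t ⊆ Set.range (MG.palette (Gends Δ) c) := by
  rintro _ ⟨p, rfl⟩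
  exact ⟨_, palette_Gends c t _⟩

theorem ncard_of_mem_componentPalettes (hc : MG.Proper (Gends Δ) c) {t : Fin (Δ - 2)} {P : Set C}
    (hP : P ∈ componentPalettes c t) : P.ncard = t + 2 :=
  ncard_of_mem_bundlePalettes (hc.component t) hP

theorem pairwise_disjoint_componentPalettes (hc : MG.Proper (Gends Δ) c) :
    Pairwise (Function.onFun Disjoint (componentPalettes c)) := by
  intro s t hst
  refine Set.disjoint_left.2 fun P hPs hPt ↦ hst (Fin.ext ?_)
  have hcard_s := ncard_of_mem_componentPalettes hc hPs
  have hcard_t := ncard_of_mem_componentPalettes hc hPt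
  omega

theorem palette_center_notMem_componentPalettes (hc : MG.Proper (Gends Δ) c) (s t : Fin (Δ - 2)) :
    MG.palette (Gends Δ) c (s, none) ∉ componentPalettes c t := by
  intro h
  have hcard := ncard_of_mem_componentPalettes hc h
  rw [ncard_palette_center hc] at hcard
  omega

end DisjointUnion

/-- For odd `Δ`, the quotient `Δ / 2` is rounded down and `v_{Δ-1}` is a pendant vertex, whose
palette contributes nothing to the bound. -/
theorem palettes_G_lower_bound_general {Δ : ℕ} (hΔ : 3 ≤ Δ) {C : Type*}
    (c : (Σ t : Fin (Δ - 2), (Fin Δ ⊕ Fin (Δ / 2) × Fin (t.1 + 1))) → C)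
    (hc : MG.Proper (Gends Δ) c) :
    (Δ / 2 + 1) * (Δ - 2) <
      {P : Set C | ∃ x : Fin (Δ - 2) × Option (Fin Δ),
        MG.palette (Gends Δ) c x = P}.ncard := by
  let centerPalette : Set C := MG.palette (Gends Δ) c (⟨0, by omega⟩, none)
  let nonCentral : Set (Set C) := ⋃ t, componentPalettes c t
  have hfin (t) : (componentPalettes c t).Finite := finite_bundlePalettes _
  have hcenter : centerPalette ∉ nonCentral := by
    simpa only [nonCentral, Set.mem_iUnion, not_exists] using
      palette_center_notMem_componentPalettes hc _
  have hsub : insert centerPalette nonCentral ⊆ Set.range (MG.palette (Gends Δ) c) :=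
    Set.insert_subset (Set.mem_range_self _) (Set.iUnion_subset (componentPalettes_subset_range c))
  calc (Δ / 2 + 1) * (Δ - 2) = (Δ / 2 + 1) * Fintype.card (Fin (Δ - 2)) := by
        rw [Fintype.card_fin]
    _ ≤ nonCentral.ncard :=
        mul_card_le_ncard_iUnion hfin (pairwise_disjoint_componentPalettes hc)
          fun t ↦ div_two_lt_ncard_bundlePalettes (by omega) (hc.component t)
    _ < (insert centerPalette nonCentral).ncard := by
        rw [Set.ncard_insert_of_notMem hcenter (Set.finite_iUnion hfin)]
        exact Nat.lt_succ_self _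
    _ ≤ (Set.range (MG.palette (Gends Δ) c)).ncard :=
        Set.ncard_le_ncard hsub (Set.finite_range _)

/-- every proper edge-coloring of `G^Δ` (Δ ≥ 4 even) has more
than `(Δ/2)·(Δ−2)` distinct palettes. -/
theorem palettes_G_lower_bound {Δ : ℕ} (hΔ : 4 ≤ Δ) (hev : 2 ∣ Δ) {C : Type*}
    (c : (Σ t : Fin (Δ - 2), (Fin Δ ⊕ Fin (Δ / 2) × Fin (t.1 + 1))) → C)
    (hc : MG.Proper (Gends Δ) c) :
    Δ / 2 * (Δ - 2) <
      {P : Set C | ∃ x : Fin (Δ - 2) × Option (Fin Δ),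
        MG.palette (Gends Δ) c x = P}.ncard :=
  (Nat.mul_le_mul_right _ (Nat.le_succ _)).trans_lt <|
    palettes_G_lower_bound_general (by omega) c hc
end
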